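/- arXiv:1501.01274 — 2 statements merged into one kernel-verified Lean document; each statement's English description precedes it below -/
import Mathlib

section
/- Let n ≥ 1 and let K ∈ C¹(ℝ^{n+1}∖{0}) be odd (K(−z) = −K(z)) and homogeneous of degree −n (K(λz) = λ^{−n}K(z) for all λ > 0 and z ≠ 0). Then for every n-dimensional affine subspace L ⊂ ℝ^{n+1}, every x ∈ ℝ^{n+1}∖L, and every j ∈ {1,…,n+1}, the integral ∫_L (∂_j K)(x−y) dℋⁿ(y) converges absolutely and equals 0. -/
open MeasureTheory Metric Set
open scoped ENNReal NNReal

noncomputable section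

abbrev Euc (d : ℕ) := EuclideanSpace ℝ (Fin d)

/-- The closed support of a Borel measure on `ℝ^d`. -/
def msupport {d : ℕ} (μ : Measure (Euc d)) : Set (Euc d) :=
  {x | ∀ r > 0, 0 < μ (Metric.ball x r)}

/-- `L` is an `n`-dimensional affine subspace (an `n`-plane) of `ℝ^d`. -/
def IsNPlane {d : ℕ} (n : ℕ) (L : Set (Euc d)) : Prop :=
  ∃ W : AffineSubspace ℝ (Euc d), (W : Set (Euc d)) = L ∧ Module.finrank ℝ W.direction = n

/-- `μ` is `n`-Ahlfors–David regular with constant `A` and (unbounded) support `E`. -/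
def IsADRWith {d : ℕ} (n : ℕ) (A : ℝ) (μ : Measure (Euc d)) (E : Set (Euc d)) : Prop :=
  1 ≤ A ∧ msupport μ = E ∧ ¬ Bornology.IsBounded E ∧
    ∀ x ∈ E, ∀ r : ℝ, 0 < r →
      ENNReal.ofReal (A⁻¹ * r ^ n) ≤ μ (closedBall x r) ∧
      μ (closedBall x r) ≤ ENNReal.ofReal (A * r ^ n)

/-- `μ` is `n`-uniformly rectifiable: `n`-ADR plus big pieces of Lipschitz images
(with BPLI constants `θ`, `M`). -/
def IsURWith {d : ℕ} (n : ℕ) (A θ M : ℝ) (μ : Measure (Euc d)) (E : Set (Euc d)) : Prop :=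
  IsADRWith n A μ E ∧ 0 < θ ∧ 0 < M ∧
    ∀ x ∈ E, ∀ r : ℝ, 0 < r →
      ∃ g : EuclideanSpace ℝ (Fin n) → Euc d, LipschitzWith (Real.toNNReal M) g ∧
        ENNReal.ofReal (θ * r ^ n) ≤ μ (closedBall x r ∩ g '' (closedBall 0 r))

/-- `S` belongs to the kernel class `K_{n+β}(ℝ^d)` with constant `A`:
size bound `|S(x,y)| ≤ A|x-y|^{-(n+β)}` and Lipschitz-in-`y` bound
`|S(x,y) - S(x,y')| ≤ A|y-y'| |x-y|^{-(n+β+1)}` for `|y-y'| ≤ |x-y|/2`. -/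
def IsCZKernel {d : ℕ} (n : ℕ) (β A : ℝ) (S : Euc d → Euc d → ℝ) : Prop :=
  (∀ x y : Euc d, x ≠ y → |S x y| ≤ A / dist x y ^ ((n : ℝ) + β)) ∧
  (∀ x y y' : Euc d, x ≠ y → dist y y' ≤ dist x y / 2 →
    |S x y - S x y'| ≤ A * dist y y' / dist x y ^ ((n : ℝ) + β + 1))

section Helpers

variable {E : Type*} [NormedAddCommGroup E] [NormedSpace ℝ E]

lemma aux_even (K : E → ℝ) (hd : ∀ z : E, z ≠ 0 → DifferentiableAt ℝ K z)
    (hodd : ∀ z : E, z ≠ 0 → K (-z) = -K z) (z : E) (hz : z ≠ 0) :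
    fderiv ℝ K (-z) = fderiv ℝ K z := by
  have h1 : HasFDerivAt (fun y => K (-y)) ((fderiv ℝ K (-z)).comp (-(ContinuousLinearMap.id ℝ E))) z :=
    HasFDerivAt.comp z (hd (-z) (neg_ne_zero.2 hz)).hasFDerivAt (hasFDerivAt_id z).neg
  have h2 : HasFDerivAt (fun y => K (-y)) (-(fderiv ℝ K z)) z := by
    refine ((hd z hz).hasFDerivAt.neg).congr_of_eventuallyEq ?_
    filter_upwards [isOpen_compl_singleton.mem_nhds hz] with y hy
    exact hodd y hy
  have h3 := h1.unique h2
  ext w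
  have := DFunLike.congr_fun h3 w
  simpa using this

lemma aux_hom (n : ℕ) (K : E → ℝ) (hd : ∀ z : E, z ≠ 0 → DifferentiableAt ℝ K z)
    (hhom : ∀ l : ℝ, 0 < l → ∀ z : E, z ≠ 0 → K (l • z) = l ^ (-(n : ℝ)) * K z)
    (l : ℝ) (hl : 0 < l) (z : E) (hz : z ≠ 0) :
    fderiv ℝ K (l • z) = l ^ (-((n : ℝ) + 1)) • fderiv ℝ K z := by
  have h1 : HasFDerivAt (fun y => K (l • y))
      ((fderiv ℝ K (l • z)).comp (l • (ContinuousLinearMap.id ℝ E))) z :=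
    HasFDerivAt.comp z (hd (l • z) (smul_ne_zero hl.ne' hz)).hasFDerivAt
      ((hasFDerivAt_id z).const_smul l)
  have h2 : HasFDerivAt (fun y => K (l • y)) ((l ^ (-(n : ℝ))) • (fderiv ℝ K z)) z := by
    refine ((hd z hz).hasFDerivAt.const_mul (l ^ (-(n : ℝ)))).congr_of_eventuallyEq ?_
    filter_upwards [isOpen_compl_singleton.mem_nhds hz] with y hy
    exact hhom l hl y hy
  have h3 := h1.unique h2
  ext w
  have := DFunLike.congr_fun h3 w
  simp only [ContinuousLinearMap.comp_apply, _root_.smul_apply, ContinuousLinearMap.id_apply,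
    map_smul, smul_eq_mul] at this
  have h4 : l ^ (-((n : ℝ) + 1)) = l ^ (-(n : ℝ)) * l⁻¹ := by
    rw [neg_add, Real.rpow_add hl, Real.rpow_neg_one]
  simp only [_root_.smul_apply, smul_eq_mul, h4]
  field_simp
  linarith

lemma aux_bound [FiniteDimensional ℝ E] (n : ℕ) (K : E → ℝ)
    (hd : ∀ z : E, z ≠ 0 → DifferentiableAt ℝ K z)
    (hc : ContinuousOn (fderiv ℝ K) {(0 : E)}ᶜ)
    (hhom : ∀ l : ℝ, 0 < l → ∀ z : E, z ≠ 0 → K (l • z) = l ^ (-(n : ℝ)) * K z) :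
    ∃ C : ℝ, 0 ≤ C ∧ ∀ z : E, z ≠ 0 → ‖fderiv ℝ K z‖ ≤ C * ‖z‖ ^ (-((n : ℝ) + 1)) := by
  obtain ⟨C, hC⟩ := (isCompact_sphere (0 : E) 1).exists_bound_of_continuousOn
    (hc.mono (fun z hz => by
      have : ‖z‖ = 1 := by simpa using hz
      intro h0
      have : z = 0 := h0
      simp_all))
  refine ⟨max C 0, le_max_right _ _, fun z hz => ?_⟩
  have hz' : 0 < ‖z‖ := norm_pos_iff.2 hz
  have hne : (‖z‖⁻¹ • z) ≠ 0 := smul_ne_zero (inv_ne_zero hz'.ne') hz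
  have h1 := aux_hom n K hd hhom ‖z‖ hz' (‖z‖⁻¹ • z) hne
  rw [smul_inv_smul₀ hz'.ne'] at h1
  rw [h1, norm_smul, Real.norm_of_nonneg (by positivity), mul_comm]
  gcongr
  refine (hC _ ?_).trans (le_max_left _ _)
  simp [norm_smul, hz'.ne']

lemma aux_lower (V : Submodule ℝ E) [FiniteDimensional ℝ E] (v : E) (hv : v ∉ V) :
    ∃ M : ℝ, 0 < M ∧ ∀ t : ℝ, 1 / 2 ≤ |t| → |t| ≤ 2 → ∀ p : V,
      1 + ‖p‖ ≤ M * ‖(p : E) + t • v‖ := by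
  have hcl : IsClosed (V : Set E) := V.closed_of_finiteDimensional
  have hδ : 0 < infDist v (V : Set E) :=
    (hcl.notMem_iff_infDist_pos ⟨0, V.zero_mem⟩).1 hv
  set δ := infDist v (V : Set E) with hδdef
  refine ⟨1 + (4 * ‖v‖ + 2) / δ, by positivity, fun t ht1 ht2 p => ?_⟩
  have ht0 : t ≠ 0 := by rintro rfl; norm_num at ht1
  have h1 : |t| * δ ≤ ‖(p : E) + t • v‖ := by
    have : δ ≤ dist v (-(t⁻¹ • (p : E))) :=
      infDist_le_dist_of_mem (V.neg_mem (V.smul_mem _ p.2))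
    rw [dist_eq_norm, sub_neg_eq_add] at this
    calc |t| * δ ≤ |t| * ‖v + t⁻¹ • (p : E)‖ := by gcongr
      _ = ‖t • (v + t⁻¹ • (p : E))‖ := by rw [norm_smul, Real.norm_eq_abs]
      _ = _ := by rw [smul_add, smul_inv_smul₀ ht0, add_comm]
  have h2 : ‖p‖ ≤ ‖(p : E) + t • v‖ + 2 * ‖v‖ := by
    have : ‖(p : E)‖ ≤ ‖(p : E) + t • v‖ + ‖t • v‖ := norm_le_add_norm_add _ _
    rw [norm_smul, Real.norm_eq_abs] at this
    have h3 : |t| * ‖v‖ ≤ 2 * ‖v‖ := by gcongr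
    have h4 : ‖p‖ = ‖(p : E)‖ := rfl
    linarith
  have h5 : δ / 2 ≤ ‖(p : E) + t • v‖ := by nlinarith
  have h6 : (2 * ‖v‖ + 1) ≤ (4 * ‖v‖ + 2) / δ * ‖(p : E) + t • v‖ := by
    rw [div_mul_eq_mul_div, le_div_iff₀ hδ]
    nlinarith [norm_nonneg v]
  linarith

/-- Translates of a transversal vector never hit the origin. -/
lemma aux_ne (V : Submodule ℝ E) (v : E) (hv : v ∉ V) (t : ℝ) (ht : t ≠ 0) (p : V) :
    (p : E) + t • v ≠ 0 := by
  intro h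
  apply hv
  have : v = t⁻¹ • (-(p : E)) := by
    rw [← eq_neg_add_iff_add_eq.2 h |>.trans (add_zero _), inv_smul_smul₀ ht]
  rw [this]
  exact V.smul_mem _ (V.neg_mem p.2)

variable [FiniteDimensional ℝ E] [MeasurableSpace E] [BorelSpace E]

lemma aux_integrable (n : ℕ) (V : Submodule ℝ E) (hV : Module.finrank ℝ V = n)
    (μ : Measure V) [μ.IsAddHaarMeasure] (K : E → ℝ) (C : ℝ) (hC0 : 0 ≤ C)
    (hc : ContinuousOn (fderiv ℝ K) {(0 : E)}ᶜ)
    (hC : ∀ z : E, z ≠ 0 → ‖fderiv ℝ K z‖ ≤ C * ‖z‖ ^ (-((n : ℝ) + 1)))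
    (v : E) (hv : v ∉ V) :
    ∃ B : ℝ, Integrable (fun p : V => B * (1 + ‖p‖) ^ (-((n : ℝ) + 1))) μ ∧
      (∀ t : ℝ, 1 / 2 ≤ |t| → |t| ≤ 2 → ∀ p : V,
        ‖fderiv ℝ K (p + t • v)‖ ≤ B * (1 + ‖p‖) ^ (-((n : ℝ) + 1))) := by
  obtain ⟨M, hM, hMb⟩ := aux_lower V v hv
  refine ⟨C * M ^ ((n : ℝ) + 1), ?_, ?_⟩
  · apply Integrable.const_mul
    exact integrable_one_add_norm (by rw [hV]; linarith)
  · intro t h1 h2 p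
    have ht0 : t ≠ 0 := by rintro rfl; norm_num at h1
    have hne := aux_ne V v hv t ht0 p
    refine (hC _ hne).trans ?_
    rw [mul_assoc]
    gcongr
    have hz : 0 < ‖(p : E) + t • v‖ := norm_pos_iff.2 hne
    have h3 := hMb t h1 h2 p
    have hp : 0 < 1 + ‖p‖ := by positivity
    calc ‖(p : E) + t • v‖ ^ (-((n : ℝ) + 1))
        ≤ (M⁻¹ * (1 + ‖p‖)) ^ (-((n : ℝ) + 1)) := by
          apply Real.rpow_le_rpow_of_nonpos (by positivity)
          · rw [inv_mul_le_iff₀ hM]; exact h3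
          · linarith [(Nat.cast_nonneg n : (0:ℝ) ≤ n)]
      _ = _ := by
          rw [Real.mul_rpow (by positivity) hp.le, Real.inv_rpow hM.le, Real.rpow_neg hM.le, inv_inv]

lemma aux_cont (V : Submodule ℝ E) {F : Type*} [TopologicalSpace F] (f : E → F)
    (hc : ContinuousOn f {(0 : E)}ᶜ) (v : E) (hv : v ∉ V) (t : ℝ) (ht : t ≠ 0) :
    Continuous (fun p : V => f (p + t • v)) :=
  hc.comp_continuous (by fun_prop) (fun p => aux_ne V v hv t ht p)

lemma aux_H_integrable (n : ℕ) (V : Submodule ℝ E) (hV : Module.finrank ℝ V = n)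
    (μ : Measure V) [μ.IsAddHaarMeasure] (K : E → ℝ) (C : ℝ) (hC0 : 0 ≤ C)
    (hd : ∀ z : E, z ≠ 0 → DifferentiableAt ℝ K z)
    (hC : ∀ z : E, z ≠ 0 → ‖fderiv ℝ K z‖ ≤ C * ‖z‖ ^ (-((n : ℝ) + 1)))
    (v : E) (hv : v ∉ V) :
    Integrable (fun p : V => K (p + (1 : ℝ) • v) - K (p + (-1 : ℝ) • v)) μ := by
  have hcK : ContinuousOn K {(0 : E)}ᶜ := fun z hz => (hd z hz).continuousAt.continuousWithinAt
  have hcont : Continuous (fun p : V => K (p + (1 : ℝ) • v) - K (p + (-1 : ℝ) • v)) :=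
    (aux_cont V K hcK v hv 1 one_ne_zero).sub (aux_cont V K hcK v hv (-1) (by norm_num))
  have hint : Integrable (fun p : V => (1 + ‖p‖) ^ (-((n : ℝ) + 1))) μ :=
    integrable_one_add_norm (by rw [hV]; linarith)
  refine hcont.locallyIntegrable.integrable_of_isBigO_cocompact ?_
    (hint.integrableAtFilter _)
  refine Asymptotics.IsBigO.of_bound (C * 4 ^ ((n : ℝ) + 1) * (2 * ‖v‖)) ?_
  have hev : ∀ᶠ p : V in Filter.cocompact V, 2 * ‖v‖ + 1 ≤ ‖p‖ :=
    (tendsto_norm_cocompact_atTop (E := V)).eventually_ge_atTop _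
  filter_upwards [hev] with p hp
  have hp' : ‖p‖ = ‖(p : E)‖ := rfl
  have hlow : ∀ z ∈ closedBall (p : E) ‖v‖, (1 + ‖p‖) / 4 ≤ ‖z‖ := by
    intro z hz
    rw [mem_closedBall, dist_eq_norm] at hz
    have := norm_sub_norm_le (p : E) z
    rw [norm_sub_rev] at this
    have h0 := norm_nonneg v
    linarith
  have hpos : 0 < (1 + ‖p‖) / 4 := by positivity
  have hne : ∀ z ∈ closedBall (p : E) ‖v‖, z ≠ 0 := fun z hz =>
    norm_pos_iff.1 (hpos.trans_le (hlow z hz))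
  have hmv := Convex.norm_image_sub_le_of_norm_fderiv_le (𝕜 := ℝ) (f := K)
    (C := C * ((1 + ‖p‖) / 4) ^ (-((n : ℝ) + 1)))
    (s := closedBall (p : E) ‖v‖) (x := p + (-1 : ℝ) • v) (y := p + (1 : ℝ) • v)
    (fun z hz => hd z (hne z hz))
    (fun z hz => (hC z (hne z hz)).trans (by
      gcongr ?_ * ?_
      apply Real.rpow_le_rpow_of_nonpos hpos (hlow z hz)
      linarith [(Nat.cast_nonneg n : (0:ℝ) ≤ n)]))
    (convex_closedBall _ _) (by simp [dist_eq_norm]) (by simp [dist_eq_norm])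
  refine hmv.trans (le_of_eq ?_)
  have e1 : ‖((p : E) + (1 : ℝ) • v) - (p + (-1 : ℝ) • v)‖ = 2 * ‖v‖ := by
    have : ((p : E) + (1 : ℝ) • v) - (p + (-1 : ℝ) • v) = (2 : ℝ) • v := by module
    rw [this, norm_smul]; norm_num
  rw [e1, Real.norm_of_nonneg (by positivity), div_eq_mul_inv,
    Real.mul_rpow (by positivity) (by positivity), Real.inv_rpow (by norm_num),
    Real.rpow_neg (by norm_num : (0:ℝ) ≤ 4), inv_inv]
  ring

lemma aux_normal (n : ℕ) (V : Submodule ℝ E) (hV : Module.finrank ℝ V = n)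
    (μ : Measure V) [μ.IsAddHaarMeasure] (K : E → ℝ)
    (hd : ∀ z : E, z ≠ 0 → DifferentiableAt ℝ K z)
    (hc : ContinuousOn (fderiv ℝ K) {(0 : E)}ᶜ)
    (hodd : ∀ z : E, z ≠ 0 → K (-z) = -K z)
    (hhom : ∀ l : ℝ, 0 < l → ∀ z : E, z ≠ 0 → K (l • z) = l ^ (-(n : ℝ)) * K z)
    (v : E) (hv : v ∉ V) :
    Integrable (fun p : V => fderiv ℝ K (p + v)) μ ∧ ∫ p : V, fderiv ℝ K (p + v) v ∂μ = 0 := by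
  obtain ⟨C, hC0, hC⟩ := aux_bound n K hd hc hhom
  obtain ⟨B, hB, hBb⟩ := aux_integrable n V hV μ K C hC0 hc hC v hv
  have hcK : ContinuousOn K {(0 : E)}ᶜ := fun z hz => (hd z hz).continuousAt.continuousWithinAt
  have hI : ∀ t : ℝ, 1 / 2 ≤ |t| → |t| ≤ 2 →
      Integrable (fun p : V => fderiv ℝ K (p + t • v)) μ := by
    intro t h1 h2
    have ht0 : t ≠ 0 := by rintro rfl; norm_num at h1
    exact hB.mono' (aux_cont V _ hc v hv t ht0).aestronglyMeasurable
      (Filter.Eventually.of_forall (hBb t h1 h2))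
  have hI1 := hI 1 (by norm_num) (by norm_num)
  have hIm := hI (-1) (by norm_num) (by norm_num)
  refine ⟨by simpa using hI1, ?_⟩
  set F : ℝ → V → ℝ := fun t p => K (p + t • v) - K (p + (-t) • v) with hF
  set F' : ℝ → V → ℝ := fun t p =>
    fderiv ℝ K (p + t • v) v + fderiv ℝ K (p + (-t) • v) v with hF'
  have hs : Ioo (1 / 2 : ℝ) 2 ∈ nhds (1 : ℝ) := Ioo_mem_nhds (by norm_num) (by norm_num)
  have hder := hasDerivAt_integral_of_dominated_loc_of_deriv_le (μ := μ) (F := F) (F' := F')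
    (x₀ := (1 : ℝ)) (bound := fun p => 2 * ‖v‖ * (B * (1 + ‖p‖) ^ (-((n : ℝ) + 1)))) hs
    (by
      filter_upwards [hs] with t ht
      have ht0 : t ≠ 0 := by have := ht.1; intro h; norm_num [h] at this
      exact ((aux_cont V K hcK v hv t ht0).sub
        (aux_cont V K hcK v hv (-t) (neg_ne_zero.2 ht0))).aestronglyMeasurable)
    (aux_H_integrable n V hV μ K C hC0 hd hC v hv)
    ((hI1.apply_continuousLinearMap v).add (hIm.apply_continuousLinearMap v)).aestronglyMeasurable
    (by
      refine Filter.Eventually.of_forall fun p t ht => ?_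
      have ht' : |t| = t := abs_of_pos (by linarith [ht.1])
      have a1 := hBb t (by rw [ht']; exact ht.1.le) (by rw [ht']; exact ht.2.le) p
      have a2 := hBb (-t) (by rw [abs_neg, ht']; exact ht.1.le)
        (by rw [abs_neg, ht']; exact ht.2.le) p
      have b1 := (fderiv ℝ K (p + t • v)).le_opNorm v
      have b2 := (fderiv ℝ K (p + (-t) • v)).le_opNorm v
      have c1 := mul_le_mul_of_nonneg_right a1 (norm_nonneg v)
      have c2 := mul_le_mul_of_nonneg_right a2 (norm_nonneg v)
      refine (norm_add_le _ _).trans ?_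
      linarith)
    (hB.const_mul _)
    (by
      refine Filter.Eventually.of_forall fun p t ht => ?_
      have ht0 : t ≠ 0 := by have := ht.1; intro h; norm_num [h] at this
      have d1 : HasDerivAt (fun s : ℝ => (p : E) + s • v) v t := by
        simpa using ((hasDerivAt_id t).smul_const v).const_add (p : E)
      have d2 : HasDerivAt (fun s : ℝ => (p : E) + (-s) • v) (-v) t := by
        simpa using ((hasDerivAt_id t).neg.smul_const v).const_add (p : E)
      have e1 := (hd _ (aux_ne V v hv t ht0 p)).hasFDerivAt.comp_hasDerivAt t d1
      have e2 := (hd _ (aux_ne V v hv (-t) (neg_ne_zero.2 ht0) p)).hasFDerivAt.comp_hasDerivAt t d2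
      have := e1.sub e2
      rw [map_neg, sub_neg_eq_add] at this
      exact this)
  have hconst : ∀ t : ℝ, 0 < t → ∫ p, F t p ∂μ = ∫ p, F 1 p ∂μ := by
    intro t ht
    have h1 := Measure.integral_comp_smul μ (F t) t
    have h2 : ∀ p : V, F t (t • p) = t ^ (-(n : ℝ)) * F 1 p := by
      intro p
      simp only [hF]
      have e1 : ((t • p : V) : E) + t • v = t • ((p : E) + (1 : ℝ) • v) := by
        rw [Submodule.coe_smul]; module
      have e2 : ((t • p : V) : E) + (-t) • v = t • ((p : E) + (-1 : ℝ) • v) := by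
        rw [Submodule.coe_smul]; module
      rw [e1, e2, hhom t ht _ (aux_ne V v hv 1 one_ne_zero p),
        hhom t ht _ (aux_ne V v hv (-1) (by norm_num) p)]
      ring
    simp only [h2] at h1
    rw [integral_const_mul, hV, abs_of_pos (by positivity), smul_eq_mul,
      Real.rpow_neg ht.le, Real.rpow_natCast] at h1
    exact (mul_left_cancel₀ (by positivity) h1).symm
  have hzero : HasDerivAt (fun t => ∫ p, F t p ∂μ) 0 1 := by
    refine (hasDerivAt_const (1 : ℝ) (∫ p, F 1 p ∂μ)).congr_of_eventuallyEq ?_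
    filter_upwards [hs] with t ht
    exact hconst t (by linarith [ht.1])
  have h0 := hder.2.unique hzero
  have hneg : ∫ p : V, fderiv ℝ K (p + (-1 : ℝ) • v) v ∂μ
      = ∫ p : V, fderiv ℝ K (p + (1 : ℝ) • v) v ∂μ := by
    rw [← integral_neg_eq_self]
    refine integral_congr_ae (Filter.Eventually.of_forall fun p => ?_)
    have e : ((-p : V) : E) + (-1 : ℝ) • v = -((p : E) + (1 : ℝ) • v) := by
      rw [Submodule.coe_neg]; module
    simp only [e]
    rw [aux_even K hd hodd _ (aux_ne V v hv 1 one_ne_zero p)]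
  simp only [hF'] at h0
  rw [integral_add (hI1.apply_continuousLinearMap v) (hIm.apply_continuousLinearMap v), hneg] at h0
  simp only [one_smul] at h0
  linarith

lemma aux_all (n : ℕ) (V : Submodule ℝ E) (hV : Module.finrank ℝ V = n)
    (hE : Module.finrank ℝ E = n + 1)
    (μ : Measure V) [μ.IsAddHaarMeasure] (K : E → ℝ)
    (hd : ∀ z : E, z ≠ 0 → DifferentiableAt ℝ K z)
    (hc : ContinuousOn (fderiv ℝ K) {(0 : E)}ᶜ)
    (hodd : ∀ z : E, z ≠ 0 → K (-z) = -K z)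
    (hhom : ∀ l : ℝ, 0 < l → ∀ z : E, z ≠ 0 → K (l • z) = l ^ (-(n : ℝ)) * K z)
    (v : E) (hv : v ∉ V) (w : E) :
    ∫ p : V, fderiv ℝ K (p + v) w ∂μ = 0 := by
  have hN := fun v hv => aux_normal n V hV μ K hd hc hodd hhom v hv
  have hint := (hN v hv).1
  have hlin : ∀ u, ∫ p : V, fderiv ℝ K (p + v) u ∂μ = (∫ p : V, fderiv ℝ K (p + v) ∂μ) u :=
    fun u => (ContinuousLinearMap.integral_apply hint u).symm
  have hvz := (hN v hv).2
  rw [hlin] at hvz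
  have hVz : ∀ u ∈ V, (∫ p : V, fderiv ℝ K (p + v) ∂μ) u = 0 := by
    intro u hu
    have hvu : v + u ∉ V := fun h => hv ((V.add_mem_iff_left hu).1 h)
    have h1 := (hN (v + u) hvu).2
    have h2 : ∫ p : V, fderiv ℝ K (p + (v + u)) (v + u) ∂μ
        = ∫ p : V, fderiv ℝ K (p + v) (v + u) ∂μ := by
      rw [← integral_add_right_eq_self (fun p : V => fderiv ℝ K (p + v) (v + u)) (⟨u, hu⟩ : V)]
      refine integral_congr_ae (Filter.Eventually.of_forall fun p => ?_)
      have e : (p : E) + (v + u) = ((p + ⟨u, hu⟩ : V) : E) + v := by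
        rw [Submodule.coe_add]; simp only; abel
      simp only [e]
    rw [h2, hlin, map_add, hvz, zero_add] at h1
    exact h1
  rw [hlin]
  have hlt : V < V ⊔ Submodule.span ℝ {v} :=
    lt_of_le_of_ne le_sup_left (fun h => hv (by
      rw [h]; exact Submodule.mem_sup_right (Submodule.mem_span_singleton_self v)))
  have htop : V ⊔ Submodule.span ℝ {v} = ⊤ := by
    apply Submodule.eq_top_of_finrank_eq
    have h1 := Submodule.finrank_lt_finrank_of_lt hlt
    have h2 := Submodule.finrank_le (V ⊔ Submodule.span ℝ {v})
    omega
  have hw : w ∈ V ⊔ Submodule.span ℝ {v} := htop ▸ Submodule.mem_top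
  obtain ⟨u, hu, s, hs, rfl⟩ := Submodule.mem_sup.1 hw
  obtain ⟨a, rfl⟩ := Submodule.mem_span_singleton.1 hs
  rw [map_add, map_smul, hVz u hu, hvz, smul_zero, add_zero]

end Helpers

/-- if `K ∈ C¹(ℝ^{n+1}∖{0})` is odd and homogeneous of degree `-n`, then for
every `n`-plane `L`, every `x ∉ L` and every coordinate direction `j`, the integral
`∫_L (∂_j K)(x-y) dℋⁿ(y)` converges absolutely and equals `0`. -/
theorem statement3 (n : ℕ) (hn : 1 ≤ n) (K : Euc (n + 1) → ℝ)
    (hK : ContDiffOn ℝ 1 K {(0 : Euc (n + 1))}ᶜ)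
    (hodd : ∀ z : Euc (n + 1), z ≠ 0 → K (-z) = -K z)
    (hhom : ∀ l : ℝ, 0 < l → ∀ z : Euc (n + 1), z ≠ 0 → K (l • z) = l ^ (-(n : ℝ)) * K z) :
    ∀ L : Set (Euc (n + 1)), IsNPlane n L → ∀ x ∉ L, ∀ j : Fin (n + 1),
      Integrable (fun y => fderiv ℝ K (x - y) (EuclideanSpace.single j 1))
          ((μH[(n : ℝ)]).restrict L) ∧
      ∫ y in L, fderiv ℝ K (x - y) (EuclideanSpace.single j 1) ∂(μH[(n : ℝ)]) = 0 := by
  rintro L ⟨W, rfl, hW⟩ x hx j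
  have hd : ∀ z : Euc (n + 1), z ≠ 0 → DifferentiableAt ℝ K z := fun z hz =>
    (hK.differentiableOn one_ne_zero).differentiableAt (isOpen_compl_singleton.mem_nhds hz)
  have hc := hK.continuousOn_fderiv_of_isOpen isOpen_compl_singleton le_rfl
  have hne : W ≠ ⊥ ∨ W = ⊥ := (em _).symm
  rcases hne with hne | hbot
  swap
  · subst hbot
    simp
  obtain ⟨y0, hy0⟩ := (AffineSubspace.nonempty_iff_ne_bot W).2 hne
  have hv : x - y0 ∉ W.direction := by
    intro h
    apply hx
    have := AffineSubspace.vadd_mem_of_mem_direction h hy0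
    simpa using this
  let g : W.direction → Euc (n + 1) := fun p => y0 + p
  have hg : Isometry g := (IsometryEquiv.addLeft y0).isometry.comp isometry_subtype_coe
  have hrange : range g = (W : Set (Euc (n + 1))) := by
    ext y
    constructor
    · rintro ⟨p, rfl⟩
      have := AffineSubspace.vadd_mem_of_mem_direction p.2 hy0
      simpa [g, add_comm] using this
    · intro hy
      exact ⟨⟨y - y0, AffineSubspace.vsub_mem_direction hy hy0⟩, by simp [g]⟩
  haveI hHaar : (μH[(n : ℝ)] : Measure W.direction).IsAddHaarMeasure := by
    have := isAddHaarMeasure_hausdorffMeasure (E := W.direction)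
    rwa [hW] at this
  have hmap := hg.map_hausdorffMeasure (d := (n : ℝ)) (Or.inl (Nat.cast_nonneg n))
  rw [hrange] at hmap
  have hemb : MeasurableEmbedding g := hg.isClosedEmbedding.measurableEmbedding
  have hN := aux_normal n W.direction hW μH[(n : ℝ)] K hd hc hodd hhom (x - y0) hv
  have hA := aux_all n W.direction hW (by simp) μH[(n : ℝ)] K hd hc hodd hhom (x - y0) hv
    (EuclideanSpace.single j 1)
  have he : ∀ p : W.direction, x - g p = ((-p : W.direction) : Euc (n + 1)) + (x - y0) := by
    intro p
    simp only [g, Submodule.coe_neg]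
    abel
  rw [← hmap]
  constructor
  · rw [hemb.integrable_map_iff]
    have := (hN.1.apply_continuousLinearMap (EuclideanSpace.single j 1)).comp_neg
    refine this.congr (Filter.Eventually.of_forall fun p => ?_)
    simp only [Function.comp, he]
  · rw [hemb.integral_map, ← hA, ← integral_neg_eq_self]
    refine integral_congr_ae (Filter.Eventually.of_forall fun p => ?_)
    simp only [he, neg_neg]
end
end

section
/- Let 0 < n < d be integers, β > 0, A, C₀, c₁ > 0, and let μ be an n-ADR measure on ℝ^d with support E. There is a constant C, depending only on n, d, β, A, C₀, c₁ and the ADR constant of μ, with the following property. Let S satisfy |S(x,y)| ≤ A|x−y|^{−(n+β)} and |S(x,y)−S(x,y′)| ≤ A|y−y′| |x−y|^{−(n+β+1)} for |y−y′| ≤ |x−y|/2. Let x ∈ ℝ^d∖E with ℓ = dist(x,E), and suppose that for each integer k ≥ 0 we are given an n-dimensional affine subspace L_k ⊂ ℝ^d intersecting B(x, 2^k ℓ), a constant c_k ∈ [0, C₀], and a number α_k ∈ [0,1] such that: (i) d_{B(x, 2^{k+1}ℓ)}(μ, c_k ℋⁿ|_{L_k}) ≤ α_k (2^k ℓ)^{n+1};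 (ii) |c_{k+1} − c_k| ≤ α_{k+1}; (iii) d_H(L_k ∩ B(x, 2^{k+1}ℓ), L_{k+1} ∩ B(x, 2^{k+1}ℓ)) ≤ α_{k+1} 2^{k+1} ℓ; (iv) dist(x, L_0) ≥ c₁ ℓ. Then | ∫ S(x,y) dμ(y) − c_0 ∫_{L_0} S(x,y) dℋⁿ(y) | ≤ C ℓ^{−β} Σ_{k≥0} 2^{−kβ} α_k. -/
open MeasureTheory Metric Set
open scoped ENNReal NNReal

noncomputable section

lemma plane_ball_measure (n d : ℕ) : ∃ K : ℝ, 0 < K ∧ ∀ (W : AffineSubspace ℝ (Euc d)),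
    Module.finrank ℝ W.direction = n → ∀ (z : Euc d) (r : ℝ), 0 < r →
    (μH[(n : ℝ)] : Measure (Euc d)) ((W : Set (Euc d)) ∩ closedBall z r)
      ≤ ENNReal.ofReal (K * r ^ n) := by
  have hfr : Module.finrank ℝ (EuclideanSpace ℝ (Fin n)) = n := by simp
  have hH : Measure.IsAddHaarMeasure (μH[(n : ℝ)] : Measure (EuclideanSpace ℝ (Fin n))) := by
    have := isAddHaarMeasure_hausdorffMeasure (E := EuclideanSpace ℝ (Fin n))
    rwa [hfr] at this
  set m := (μH[(n : ℝ)] : Measure (EuclideanSpace ℝ (Fin n))) (ball 0 1) with hm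
  have hmfin : m ≠ ⊤ := measure_ball_lt_top.ne
  refine ⟨2 ^ n * m.toReal + 1, by positivity, ?_⟩
  intro W hW z r hr
  rcases ((W : Set (Euc d)) ∩ closedBall z r).eq_empty_or_nonempty with he | ⟨p, hpW, hpz⟩
  · rw [he]; simp
  let e : EuclideanSpace ℝ (Fin n) ≃ₗᵢ[ℝ] W.direction :=
    ((stdOrthonormalBasis ℝ W.direction).reindex (finCongr hW)).repr.symm
  let g : EuclideanSpace ℝ (Fin n) → Euc d := fun v => p + (e v : Euc d)
  have hg : Isometry g := by
    apply Isometry.of_dist_eq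
    intro v w
    simp only [g, dist_add_left]
    rw [← e.dist_map v w]
    rfl
  have hsub : (W : Set (Euc d)) ∩ closedBall z r ⊆ g '' (closedBall 0 (2 * r)) := by
    rintro y ⟨hyW, hyz⟩
    have hv : y - p ∈ W.direction := AffineSubspace.vsub_mem_direction hyW hpW
    refine ⟨e.symm ⟨y - p, hv⟩, ?_, ?_⟩
    · rw [mem_closedBall_zero_iff, LinearIsometryEquiv.norm_map]
      change ‖y - p‖ ≤ 2 * r
      rw [← dist_eq_norm]
      rw [mem_closedBall] at hyz hpz
      linarith [dist_triangle_right y p z]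
    · simp [g]
  calc _ ≤ (μH[(n : ℝ)] : Measure (Euc d)) (g '' (closedBall 0 (2 * r))) := measure_mono hsub
    _ = (μH[(n : ℝ)] : Measure (EuclideanSpace ℝ (Fin n))) (closedBall 0 (2 * r)) :=
        hg.hausdorffMeasure_image (Or.inl (by positivity)) _
    _ = ENNReal.ofReal ((2 * r) ^ n) * m := by
        rw [Measure.addHaar_closedBall _ _ (by positivity), hfr]
    _ = ENNReal.ofReal ((2 * r) ^ n * m.toReal) := by
        rw [ENNReal.ofReal_mul (by positivity), ENNReal.ofReal_toReal hmfin]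
    _ ≤ _ := by
        apply ENNReal.ofReal_le_ofReal
        have : 0 ≤ r ^ n := by positivity
        rw [mul_pow]
        nlinarith

lemma one_sided (n d : ℕ) (W W' : AffineSubspace ℝ (Euc d))
    (hW : Module.finrank ℝ W.direction = n) (hW' : Module.finrank ℝ W'.direction = n)
    (p p' x : Euc d) (hp : p ∈ W) (hp' : p' ∈ W') (ε δ D Λ : ℝ)
    (hε1 : ε ≤ 1 / 2) (hΛ : 0 ≤ Λ) (hε0 : 0 ≤ ε)
    (hang : ∀ v ∈ W.direction, ‖v - W'.direction.starProjection v‖ ≤ ε * ‖v‖)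
    (hδ : dist p p' ≤ δ) (hpx : dist p' x ≤ D) (F : Euc d → ℝ)
    (hFL : ∀ y z, |F y - F z| ≤ Λ * dist y z) (_hF0 : ∀ y, 0 ≤ F y)
    (hFs : ∀ y, 2 * D < dist y x → F y = 0) :
    ∫⁻ y in (W' : Set (Euc d)), ENNReal.ofReal (F y) ∂(μH[(n : ℝ)]) ≤
      ∫⁻ y in (W : Set (Euc d)), ENNReal.ofReal (F y) ∂(μH[(n : ℝ)]) +
      ENNReal.ofReal (Λ * (δ + ε * (6 * D))) *
        (μH[(n : ℝ)] : Measure (Euc d)) ((W : Set (Euc d)) ∩ closedBall p (6 * D)) := by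
  set P := W'.direction.starProjection with hP
  have hPn : ∀ v, ‖P v‖ ≤ ‖v‖ := fun v => Submodule.norm_starProjection_apply_le _ v
  have hlow : ∀ v ∈ W.direction, ‖v‖ ≤ 2 * ‖P v‖ := by
    intro v hv
    have h1 := hang v hv
    have h2 : ‖v‖ ≤ ‖v - P v‖ + ‖P v‖ := by
      simpa using norm_add_le (v - P v) (P v)
    nlinarith [norm_nonneg v]
  have hclW : IsClosed (W : Set (Euc d)) := AffineSubspace.closed_of_finiteDimensional W
  have hclW' : IsClosed (W' : Set (Euc d)) := AffineSubspace.closed_of_finiteDimensional W'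
  have hsurj : ∀ v' ∈ W'.direction, ∃ v ∈ W.direction, P v = v' := by
    let f : W.direction →ₗ[ℝ] W'.direction :=
      (W'.direction.orthogonalProjectionOnto : Euc d →ₗ[ℝ] W'.direction) ∘ₗ W.direction.subtype
    have hfP : ∀ v, ((f v : W'.direction) : Euc d) = P v := fun v => rfl
    have hinj : Function.Injective f := by
      rw [injective_iff_map_eq_zero]
      intro v hv
      have := hlow v v.2
      rw [← hfP, hv] at this
      simp at this
      exact this
    have hs := (LinearMap.injective_iff_surjective_of_finrank_eq_finrank (hW.trans hW'.symm)).1 hinj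
    intro v' hv'
    obtain ⟨v, hv⟩ := hs ⟨v', hv'⟩
    exact ⟨v, v.2, by rw [← hfP, hv]⟩
  let T : Euc d → Euc d := fun y => p' + P (y - p)
  have hTL : LipschitzWith 1 T := by
    apply LipschitzWith.of_dist_le_mul
    intro y z
    simp only [T, dist_add_left, NNReal.coe_one, one_mul]
    rw [dist_eq_norm, ← map_sub, dist_eq_norm]
    refine (hPn _).trans (le_of_eq ?_)
    congr 1; abel
  have hTm : Measurable T := hTL.continuous.measurable
  have hFc : Continuous F := by
    have : LipschitzWith ⟨Λ, hΛ⟩ F := LipschitzWith.of_dist_le_mul (fun y z => by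
      rw [Real.dist_eq]; exact hFL y z)
    exact this.continuous
  have hFm : Measurable (fun y => ENNReal.ofReal (F y)) := by fun_prop
  have hmeas : (μH[(n : ℝ)] : Measure (Euc d)).restrict (W' : Set (Euc d)) ≤
      Measure.map T ((μH[(n : ℝ)] : Measure (Euc d)).restrict (W : Set (Euc d))) := by
    rw [Measure.le_iff]
    intro s hs
    rw [Measure.map_apply hTm hs, Measure.restrict_apply hs, Measure.restrict_apply (hTm hs)]
    have hsub : s ∩ (W' : Set (Euc d)) ⊆ T '' (T ⁻¹' s ∩ (W : Set (Euc d))) := by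
      rintro y ⟨hys, hyW⟩
      obtain ⟨v, hv, hvv⟩ := hsurj (y - p') (AffineSubspace.vsub_mem_direction hyW hp')
      have hT : T (p + v) = y := by simp [T, hvv]
      refine ⟨p + v, ⟨by rw [mem_preimage, hT]; exact hys, ?_⟩, hT⟩
      rw [add_comm]
      exact AffineSubspace.vadd_mem_of_mem_direction hv hp
    refine (measure_mono hsub).trans ?_
    simpa using hTL.hausdorffMeasure_image_le (d := (n : ℝ)) (by positivity)
      (T ⁻¹' s ∩ (W : Set (Euc d)))
  have hTy : ∀ y ∈ W, dist (T y) y ≤ δ + ε * dist y p := by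
    intro y hy
    have hv : y - p ∈ W.direction := AffineSubspace.vsub_mem_direction hy hp
    have h1 := hang _ hv
    have h2 : T y - y = (p' - p) - ((y - p) - P (y - p)) := by simp only [T]; abel
    rw [dist_eq_norm, h2, dist_eq_norm]
    refine (norm_sub_le _ _).trans ?_
    rw [dist_comm, dist_eq_norm] at hδ
    linarith
  calc ∫⁻ y in (W' : Set (Euc d)), ENNReal.ofReal (F y) ∂(μH[(n : ℝ)])
      ≤ ∫⁻ y, ENNReal.ofReal (F y)
          ∂(Measure.map T ((μH[(n : ℝ)] : Measure (Euc d)).restrict (W : Set (Euc d)))) :=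
        lintegral_mono' hmeas le_rfl
    _ = ∫⁻ y in (W : Set (Euc d)), ENNReal.ofReal (F (T y)) ∂(μH[(n : ℝ)]) :=
        lintegral_map hFm hTm
    _ ≤ ∫⁻ y in (W : Set (Euc d)), (ENNReal.ofReal (F y) +
          (closedBall p (6 * D)).indicator (fun _ => ENNReal.ofReal (Λ * (δ + ε * (6 * D)))) y)
          ∂(μH[(n : ℝ)]) := by
        apply setLIntegral_mono' hclW.measurableSet
        intro y hy
        by_cases hyp : y ∈ closedBall p (6 * D)
        · rw [indicator_of_mem hyp]
          have hyp' : dist y p ≤ 6 * D := hyp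
          have h3 : F (T y) ≤ F y + Λ * (δ + ε * (6 * D)) := by
            have h4 := (abs_le.1 (hFL (T y) y)).2
            have h5 := hTy y hy
            have h6 : dist (T y) y ≤ δ + ε * (6 * D) := by nlinarith
            nlinarith
          refine (ENNReal.ofReal_le_ofReal h3).trans ENNReal.ofReal_add_le
        · have : F (T y) = 0 := by
            apply hFs
            rw [mem_closedBall, not_le, dist_eq_norm] at hyp
            have h1 := hlow _ (AffineSubspace.vsub_mem_direction hy hp)
            have h1' : ‖y - p‖ ≤ 2 * ‖P (y - p)‖ := h1
            have h2 : ‖P (y - p)‖ = dist (T y) p' := by simp [T, dist_eq_norm]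
            have h3 := dist_triangle_right (T y) p' x
            linarith
          rw [this]; simp
    _ = _ := by
        rw [lintegral_add_left hFm, lintegral_indicator measurableSet_closedBall, lintegral_const]
        congr 2
        rw [Measure.restrict_apply MeasurableSet.univ, univ_inter,
          Measure.restrict_apply measurableSet_closedBall, inter_comm]

lemma int_bound {d : ℕ} (σ : Measure (Euc d)) (x : Euc d) (ρ Q M : ℝ)
    (hQ : σ (closedBall x ρ) ≤ ENNReal.ofReal Q) (hQ0 : 0 ≤ Q) (hM : 0 ≤ M) (F : Euc d → ℝ)
    (hF : Continuous F) (hFs : ∀ y, ρ < dist y x → F y = 0) (hFb : ∀ y, |F y| ≤ M) :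
    Integrable F σ ∧ ∫ y, ‖F y‖ ∂σ ≤ M * Q := by
  have hfin : σ (closedBall x ρ) < ⊤ := hQ.trans_lt ENNReal.ofReal_lt_top
  have hle : ∀ y, ‖F y‖ ≤ (closedBall x ρ).indicator (fun _ => M) y := by
    intro y
    by_cases hy : y ∈ closedBall x ρ
    · rw [indicator_of_mem hy]; exact hFb y
    · rw [indicator_of_notMem hy, hFs y (by simpa using hy)]; simp
  have hi : Integrable ((closedBall x ρ).indicator (fun _ => M)) σ :=
    (integrable_indicator_iff measurableSet_closedBall).2 (integrableOn_const hfin.ne)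
  have hFi : Integrable F σ :=
    hi.mono' hF.aestronglyMeasurable (Filter.Eventually.of_forall hle)
  refine ⟨hFi, ?_⟩
  calc ∫ y, ‖F y‖ ∂σ ≤ ∫ y, (closedBall x ρ).indicator (fun _ => M) y ∂σ :=
        integral_mono hFi.norm hi hle
    _ = σ.real (closedBall x ρ) * M := by
        rw [integral_indicator measurableSet_closedBall, setIntegral_const, smul_eq_mul]
    _ ≤ M * Q := by
        rw [mul_comm]
        apply mul_le_mul_of_nonneg_left _ hM
        exact ENNReal.toReal_le_of_le_ofReal hQ0 hQ

lemma cont_of_lip {d : ℕ} {Λ : ℝ} {F : Euc d → ℝ}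
    (hFL : ∀ y z, |F y - F z| ≤ Λ * dist y z) : Continuous F := by
  have : LipschitzWith (Real.toNNReal Λ) F := LipschitzWith.of_dist_le_mul (fun y z => by
    rw [Real.dist_eq]
    exact (hFL y z).trans (mul_le_mul_of_nonneg_right (Real.le_coe_toNNReal _) dist_nonneg))
  exact this.continuous

lemma plane_int_bound {n d : ℕ} {K : ℝ} (hK0 : 0 < K) (hK : ∀ (W : AffineSubspace ℝ (Euc d)),
    Module.finrank ℝ W.direction = n → ∀ (z : Euc d) (r : ℝ), 0 < r →
    (μH[(n : ℝ)] : Measure (Euc d)) ((W : Set (Euc d)) ∩ closedBall z r)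
      ≤ ENNReal.ofReal (K * r ^ n))
    (W : AffineSubspace ℝ (Euc d)) (hW : Module.finrank ℝ W.direction = n)
    (x : Euc d) (D Λ : ℝ) (hD : 0 < D) (hΛ : 0 ≤ Λ) (F : Euc d → ℝ)
    (hFL : ∀ y z, |F y - F z| ≤ Λ * dist y z)
    (hFs : ∀ y, 2 * D < dist y x → F y = 0) (hFb : ∀ y, |F y| ≤ Λ * D) :
    Integrable F ((μH[(n : ℝ)] : Measure (Euc d)).restrict (W : Set (Euc d))) ∧
    ∫ y in (W : Set (Euc d)), ‖F y‖ ∂(μH[(n : ℝ)]) ≤ (Λ * D) * (K * (2 * D) ^ n) := by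
  apply int_bound _ x (2 * D) _ _ _ (by positivity) (by positivity) F (cont_of_lip hFL) hFs hFb
  rw [Measure.restrict_apply measurableSet_closedBall, inter_comm]
  exact hK W hW x _ (by positivity)

lemma one_sided_real {n d : ℕ} {K : ℝ} (hK0 : 0 < K) (hK : ∀ (W : AffineSubspace ℝ (Euc d)),
    Module.finrank ℝ W.direction = n → ∀ (z : Euc d) (r : ℝ), 0 < r →
    (μH[(n : ℝ)] : Measure (Euc d)) ((W : Set (Euc d)) ∩ closedBall z r)
      ≤ ENNReal.ofReal (K * r ^ n))
    (W W' : AffineSubspace ℝ (Euc d))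
    (hW : Module.finrank ℝ W.direction = n) (hW' : Module.finrank ℝ W'.direction = n)
    (p p' x : Euc d) (hp : p ∈ W) (hp' : p' ∈ W') (ε δ D Λ : ℝ) (hD : 0 < D)
    (hε1 : ε ≤ 1 / 2) (hΛ : 0 ≤ Λ) (hε0 : 0 ≤ ε)
    (hang : ∀ v ∈ W.direction, ‖v - W'.direction.starProjection v‖ ≤ ε * ‖v‖)
    (hδ : dist p p' ≤ δ) (hpx : dist p' x ≤ D) (F : Euc d → ℝ)
    (hFL : ∀ y z, |F y - F z| ≤ Λ * dist y z) (hF0 : ∀ y, 0 ≤ F y)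
    (hFs : ∀ y, 2 * D < dist y x → F y = 0) (hFb : ∀ y, |F y| ≤ Λ * D) :
    ∫ y in (W' : Set (Euc d)), F y ∂(μH[(n : ℝ)]) ≤
      ∫ y in (W : Set (Euc d)), F y ∂(μH[(n : ℝ)]) +
      (Λ * (δ + ε * (6 * D))) * (K * (6 * D) ^ n) := by
  have h := one_sided n d W W' hW hW' p p' x hp hp' ε δ D Λ hε1 hΛ hε0 hang hδ hpx F hFL hF0 hFs
  have hi := (plane_int_bound hK0 hK W hW x D Λ hD hΛ F hFL hFs hFb).1
  have hi' := (plane_int_bound hK0 hK W' hW' x D Λ hD hΛ F hFL hFs hFb).1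
  have hδ0 : 0 ≤ δ := dist_nonneg.trans hδ
  rw [← ofReal_integral_eq_lintegral_ofReal hi (Filter.Eventually.of_forall hF0),
    ← ofReal_integral_eq_lintegral_ofReal hi' (Filter.Eventually.of_forall hF0)] at h
  have hI : 0 ≤ ∫ y in (W : Set (Euc d)), F y ∂(μH[(n : ℝ)]) := integral_nonneg hF0
  have h2 := h.trans (add_le_add_right (mul_le_mul_right (hK W hW p (6 * D) (by positivity)) _) _)
  rw [← ENNReal.ofReal_mul (by positivity), ← ENNReal.ofReal_add hI (by positivity)] at h2
  exact (ENNReal.ofReal_le_ofReal_iff (by positivity)).1 h2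

lemma plane_compare {n d : ℕ} {K : ℝ} (hK0 : 0 < K) (hK : ∀ (W : AffineSubspace ℝ (Euc d)),
    Module.finrank ℝ W.direction = n → ∀ (z : Euc d) (r : ℝ), 0 < r →
    (μH[(n : ℝ)] : Measure (Euc d)) ((W : Set (Euc d)) ∩ closedBall z r)
      ≤ ENNReal.ofReal (K * r ^ n))
    (W W' : AffineSubspace ℝ (Euc d))
    (hW : Module.finrank ℝ W.direction = n) (hW' : Module.finrank ℝ W'.direction = n)
    (p x : Euc d) (hp : p ∈ W) (α R D Λ : ℝ) (hR : 0 < R) (hRD : R ≤ D) (hα : 0 ≤ α)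
    (hΛ : 0 ≤ Λ) (hpx : dist p x ≤ R / 2)
    (hne : ((W' : Set (Euc d)) ∩ closedBall x R).Nonempty)
    (hH : hausdorffDist ((W : Set (Euc d)) ∩ closedBall x R) ((W' : Set (Euc d)) ∩ closedBall x R)
      ≤ α * R) (F : Euc d → ℝ)
    (hFL : ∀ y z, |F y - F z| ≤ Λ * dist y z)
    (hFs : ∀ y, 2 * D < dist y x → F y = 0) (hFb : ∀ y, |F y| ≤ Λ * D) :
    |∫ y in (W : Set (Euc d)), F y ∂(μH[(n : ℝ)]) - ∫ y in (W' : Set (Euc d)), F y ∂(μH[(n : ℝ)])|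
      ≤ 100 * 6 ^ n * K * (Λ * D ^ (n + 1)) * α := by
  have hD : 0 < D := hR.trans_le hRD
  obtain ⟨hi, hb⟩ := plane_int_bound hK0 hK W hW x D Λ hD hΛ F hFL hFs hFb
  obtain ⟨hi', hb'⟩ := plane_int_bound hK0 hK W' hW' x D Λ hD hΛ F hFL hFs hFb
  set Z := K * (Λ * D ^ (n + 1)) with hZ
  have hZ0 : 0 ≤ Z := by positivity
  rcases le_or_gt (1 / 16) α with hlarge | hsmall
  · have h1 := (norm_integral_le_integral_norm F).trans hb
    have h2 := (norm_integral_le_integral_norm F).trans hb'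
    rw [Real.norm_eq_abs] at h1 h2
    have h3 : Λ * D * (K * (2 * D) ^ n) = 2 ^ n * Z := by rw [hZ, mul_pow]; ring
    rw [h3] at h1 h2
    have h4 : (2 : ℝ) ^ n ≤ 6 ^ n := pow_le_pow_left₀ (by norm_num) (by norm_num) n
    calc _ ≤ 2 ^ n * Z + 2 ^ n * Z := (abs_sub _ _).trans (add_le_add h1 h2)
      _ ≤ 6 ^ n * Z + 6 ^ n * Z := by gcongr
      _ ≤ 100 * (6 ^ n * Z) * α := by
        have : 0 ≤ 6 ^ n * Z := by positivity
        nlinarith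
      _ = _ := by rw [hZ]; ring
  · have hclW' : IsClosed (W' : Set (Euc d)) := AffineSubspace.closed_of_finiteDimensional W'
    have hpB : p ∈ (W : Set (Euc d)) ∩ closedBall x R :=
      ⟨hp, by rw [mem_closedBall]; linarith⟩
    have hfin : hausdorffEDist ((W : Set (Euc d)) ∩ closedBall x R)
        ((W' : Set (Euc d)) ∩ closedBall x R) ≠ ⊤ :=
      hausdorffEDist_ne_top_of_nonempty_of_bounded ⟨p, hpB⟩ hne
        (isBounded_closedBall.subset inter_subset_right)
        (isBounded_closedBall.subset inter_subset_right)
    have hnear : ∀ q ∈ (W : Set (Euc d)) ∩ closedBall x R,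
        ∃ q' ∈ (W' : Set (Euc d)) ∩ closedBall x R, dist q q' ≤ α * R := by
      intro q hq
      obtain ⟨q', hq', he⟩ := (hclW'.inter isClosed_closedBall).exists_infDist_eq_dist hne q
      exact ⟨q', hq', he ▸ (infDist_le_hausdorffDist_of_mem hq hfin).trans hH⟩
    obtain ⟨p', ⟨hp'W, hp'x⟩, hpp'⟩ := hnear p hpB
    have hmin : ∀ (U : Submodule ℝ (Euc d)) (v : Euc d) (u : Euc d), u ∈ U →
        ‖v - U.starProjection v‖ ≤ ‖v - u‖ := by
      intro U v u hu
      rw [Submodule.starProjection_minimal]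
      exact ciInf_le ⟨0, by rintro _ ⟨y, rfl⟩; exact norm_nonneg _⟩ (⟨u, hu⟩ : U)
    have hang : ∀ v ∈ W.direction, ‖v - W'.direction.starProjection v‖ ≤ (4 * α) * ‖v‖ := by
      intro v hv
      rcases eq_or_ne v 0 with rfl | hv0
      · simp
      have hvn : 0 < ‖v‖ := norm_pos_iff.2 hv0
      set t := R / (2 * ‖v‖) with ht
      have ht0 : 0 < t := by positivity
      have htv : t * ‖v‖ = R / 2 := by rw [ht]; field_simp
      have hqW : p + t • v ∈ W := by
        rw [add_comm]
        exact AffineSubspace.vadd_mem_of_mem_direction (W.direction.smul_mem t hv) hp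
      have hnt : ‖t • v‖ = R / 2 := by rw [norm_smul, Real.norm_of_nonneg ht0.le, htv]
      obtain ⟨q', ⟨hq'W, -⟩, hqq⟩ := hnear (p + t • v) ⟨hqW, by
        rw [mem_closedBall]
        have := dist_triangle (p + t • v) p x
        rw [dist_self_add_left, hnt] at this
        linarith⟩
      have hm := hmin W'.direction (t • v) (q' - p')
        (AffineSubspace.vsub_mem_direction hq'W hp'W)
      have h1 : t • v - (q' - p') = (p + t • v - q') - (p - p') := by abel
      have h2 : ‖t • v - (q' - p')‖ ≤ α * R + α * R := by
        rw [h1]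
        refine (norm_sub_le _ _).trans ?_
        rw [← dist_eq_norm, ← dist_eq_norm]
        linarith
      rw [map_smul, ← smul_sub, norm_smul, Real.norm_of_nonneg ht0.le] at hm
      have h3 : t * ‖v - W'.direction.starProjection v‖ ≤ t * (4 * α * ‖v‖) := by
        nlinarith
      exact le_of_mul_le_mul_left h3 ht0
    have hang' : ∀ v ∈ W'.direction, ‖v - W.direction.starProjection v‖ ≤ (8 * α) * ‖v‖ := by
      let f : W.direction →ₗ[ℝ] W'.direction :=
        (W'.direction.orthogonalProjectionOnto : Euc d →ₗ[ℝ] W'.direction) ∘ₗ W.direction.subtype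
      have hfP : ∀ v, ((f v : W'.direction) : Euc d) = W'.direction.starProjection v := fun v => rfl
      have hlow : ∀ v ∈ W.direction, ‖v‖ ≤ 2 * ‖W'.direction.starProjection v‖ := by
        intro v hv
        have h1 := hang v hv
        have h2 : ‖v‖ ≤ ‖v - W'.direction.starProjection v‖ + ‖W'.direction.starProjection v‖ := by
          simpa using norm_add_le (v - W'.direction.starProjection v) (W'.direction.starProjection v)
        nlinarith [norm_nonneg v]
      have hinj : Function.Injective f := by
        rw [injective_iff_map_eq_zero]
        intro v hv
        have := hlow v v.2
        rw [← hfP, hv] at this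
        simp at this
        exact this
      have hs :=
        (LinearMap.injective_iff_surjective_of_finrank_eq_finrank (hW.trans hW'.symm)).1 hinj
      intro v' hv'
      obtain ⟨v, hv⟩ := hs ⟨v', hv'⟩
      have hvv : W'.direction.starProjection v = v' := by rw [← hfP, hv]
      have h1 := hmin W.direction v' v v.2
      have h2 := hang v v.2
      have h3 := hlow v v.2
      rw [hvv] at h2 h3
      rw [norm_sub_rev] at h2
      nlinarith
    have key : ∀ G : Euc d → ℝ, (∀ y z, |G y - G z| ≤ Λ * dist y z) → (∀ y, 0 ≤ G y) →
        (∀ y, 2 * D < dist y x → G y = 0) → (∀ y, |G y| ≤ Λ * D) →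
        |∫ y in (W : Set (Euc d)), G y ∂(μH[(n : ℝ)]) -
          ∫ y in (W' : Set (Euc d)), G y ∂(μH[(n : ℝ)])| ≤ 49 * 6 ^ n * Z * α := by
      intro G hGL hG0 hGs hGb
      rw [mem_closedBall] at hp'x
      have hδ : dist p p' ≤ α * D := hpp'.trans (by gcongr)
      have h1 := one_sided_real hK0 hK W W' hW hW' p p' x hp hp'W (8 * α) (α * D) D Λ hD
        (by linarith) hΛ (by positivity)
        (fun v hv => (hang v hv).trans (by gcongr; norm_num)) hδ (by linarith) G hGL hG0 hGs hGb
      have h2 := one_sided_real hK0 hK W' W hW' hW p' p x hp'W hp (8 * α) (α * D) D Λ hD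
        (by linarith) hΛ (by positivity) hang' (by rwa [dist_comm]) (by linarith)
        G hGL hG0 hGs hGb
      have h3 : Λ * (α * D + 8 * α * (6 * D)) * (K * (6 * D) ^ n) = 49 * 6 ^ n * Z * α := by
        rw [hZ, mul_pow]; ring
      rw [h3] at h1 h2
      rw [abs_le]; constructor <;> linarith
    have hpos := key (fun y => max (F y) 0) (fun y z => (abs_max_sub_max_le_abs _ _ _).trans (hFL y z))
      (fun y => le_max_right _ _) (fun y hy => by simp [hFs y hy])
      (fun y => by
        rw [abs_of_nonneg (le_max_right _ _)]
        exact max_le ((le_abs_self _).trans (hFb y)) (by positivity))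
    have hneg := key (fun y => max (-F y) 0) (fun y z => (abs_max_sub_max_le_abs _ _ _).trans (by
        have e : |(-F y) - (-F z)| = |F y - F z| := by rw [← abs_neg]; congr 1; ring
        rw [e]; exact hFL y z))
      (fun y => le_max_right _ _) (fun y hy => by simp [hFs y hy])
      (fun y => by
        rw [abs_of_nonneg (le_max_right _ _)]
        exact max_le ((neg_le_abs _).trans (hFb y)) (by positivity))
    have hdec : ∀ y, F y = max (F y) 0 - max (-F y) 0 := by
      intro y
      rcases le_total 0 (F y) with h | h
      · rw [max_eq_left h, max_eq_right (by linarith)]; ring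
      · rw [max_eq_right h, max_eq_left (by linarith)]; ring
    have e1 : ∫ y in (W : Set (Euc d)), F y ∂(μH[(n : ℝ)]) =
        ∫ y in (W : Set (Euc d)), max (F y) 0 ∂(μH[(n : ℝ)]) -
        ∫ y in (W : Set (Euc d)), max (-F y) 0 ∂(μH[(n : ℝ)]) := by
      rw [← integral_sub hi.pos_part hi.neg_part]
      exact integral_congr_ae (Filter.Eventually.of_forall hdec)
    have e2 : ∫ y in (W' : Set (Euc d)), F y ∂(μH[(n : ℝ)]) =
        ∫ y in (W' : Set (Euc d)), max (F y) 0 ∂(μH[(n : ℝ)]) -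
        ∫ y in (W' : Set (Euc d)), max (-F y) 0 ∂(μH[(n : ℝ)]) := by
      rw [← integral_sub hi'.pos_part hi'.neg_part]
      exact integral_congr_ae (Filter.Eventually.of_forall hdec)
    have hfinal : 100 * 6 ^ n * K * (Λ * D ^ (n + 1)) * α = 100 * (6 ^ n * Z * α) := by
      rw [hZ]; ring
    have h0 : 0 ≤ 6 ^ n * Z * α := by positivity
    rw [e1, e2, hfinal]
    rw [abs_le] at hpos hneg ⊢
    constructor <;> linarith [hpos.1, hpos.2, hneg.1, hneg.2]

lemma kernel_lip {n d : ℕ} {β A : ℝ} (hβ : 0 < β) (hA : 0 < A) {S : Euc d → Euc d → ℝ}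
    (hS : IsCZKernel n β A S) (x : Euc d) (r : ℝ) (hr : 0 < r) (φ : Euc d → ℝ)
    (hφ0 : ∀ y, dist y x ≤ r → φ y = 0) (hφ1 : ∀ y, |φ y| ≤ 1)
    (hφL : ∀ y z, |φ y - φ z| ≤ 2 / r * dist y z) :
    (∀ y, |S x y * φ y| ≤ A / r ^ ((n : ℝ) + β)) ∧
    (∀ y z, |S x y * φ y - S x z * φ z| ≤ 6 * A / r ^ ((n : ℝ) + β + 1) * dist y z) := by
  obtain ⟨hS1, hS2⟩ := hS
  have ha : 0 < (n : ℝ) + β := by positivity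
  have hra : 0 < r ^ ((n : ℝ) + β) := Real.rpow_pos_of_pos hr _
  have hra1 : r ^ ((n : ℝ) + β + 1) = r ^ ((n : ℝ) + β) * r := by
    rw [Real.rpow_add hr, Real.rpow_one]
  have hSb : ∀ y, r < dist y x → |S x y| ≤ A / r ^ ((n : ℝ) + β) := by
    intro y hy
    have hne : x ≠ y := by rintro rfl; simp at hy; linarith
    refine (hS1 x y hne).trans ?_
    rw [dist_comm]
    gcongr
  have hb : ∀ y, |S x y * φ y| ≤ A / r ^ ((n : ℝ) + β) := by
    intro y
    rcases le_or_gt (dist y x) r with h | h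
    · rw [hφ0 y h]; simp; positivity
    · rw [abs_mul]
      calc _ ≤ A / r ^ ((n : ℝ) + β) * 1 := by
            gcongr
            · exact hSb y h
            · exact hφ1 y
        _ = _ := mul_one _
  refine ⟨hb, ?_⟩
  have main : ∀ y z, dist z x ≤ dist y x →
      |S x y * φ y - S x z * φ z| ≤ 6 * A / r ^ ((n : ℝ) + β + 1) * dist y z := by
    intro y z hzy
    rcases le_or_gt (dist y x) r with h | h
    · rw [hφ0 y h, hφ0 z (hzy.trans h)]; simp; positivity
    have hQ : A / r ^ ((n : ℝ) + β + 1) * r = A / r ^ ((n : ℝ) + β) := by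
      rw [hra1]; field_simp
    have hQ0 : 0 ≤ A / r ^ ((n : ℝ) + β + 1) := by positivity
    have h6 : 6 * A / r ^ ((n : ℝ) + β + 1) = 6 * (A / r ^ ((n : ℝ) + β + 1)) := by ring
    rw [h6]
    rcases le_or_gt (dist y z) (dist x y / 2) with hc | hc
    · have hne : x ≠ y := by rintro rfl; simp at h; linarith
      have h1 := hS2 x y z hne hc
      have h2 : A * dist y z / dist x y ^ ((n : ℝ) + β + 1) ≤
          A / r ^ ((n : ℝ) + β + 1) * dist y z := by
        rw [mul_div_right_comm, dist_comm x y]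
        gcongr
      have h3 : S x y * φ y - S x z * φ z = (S x y - S x z) * φ z + S x y * (φ y - φ z) := by ring
      rw [h3]
      calc _ ≤ |S x y - S x z| * |φ z| + |S x y| * |φ y - φ z| := by
            rw [← abs_mul, ← abs_mul]; exact abs_add_le _ _
        _ ≤ (A / r ^ ((n : ℝ) + β + 1) * dist y z) * 1 +
            A / r ^ ((n : ℝ) + β) * (2 / r * dist y z) := by
            gcongr
            · exact h1.trans h2
            · exact hφ1 z
            · exact hSb y h
            · exact hφL y z
        _ = 3 * (A / r ^ ((n : ℝ) + β + 1) * dist y z) := by rw [← hQ]; field_simp; ring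
        _ ≤ _ := by
            have : 0 ≤ A / r ^ ((n : ℝ) + β + 1) * dist y z := by positivity
            linarith
    · rw [dist_comm x y] at hc
      have h1 := hb y
      have h2 := hb z
      rw [← hQ] at h1 h2
      calc _ ≤ |S x y * φ y| + |S x z * φ z| := abs_sub _ _
        _ ≤ 2 * (A / r ^ ((n : ℝ) + β + 1) * r) := by linarith
        _ ≤ _ := by
            have : r ≤ 2 * dist y z := by linarith
            nlinarith
  intro y z
  rcases le_total (dist z x) (dist y x) with h | h
  · exact main y z h
  · rw [abs_sub_comm, dist_comm]; exact main z y h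

/-- A piecewise linear cutoff. -/
def cutoff (t : ℝ) : ℝ := max 0 (min 1 (2 - t))

lemma cutoff_lip (s t : ℝ) : |cutoff s - cutoff t| ≤ |s - t| := by
  unfold cutoff
  have h1 := abs_max_sub_max_le_abs (min 1 (2 - s)) (min 1 (2 - t)) 0
  rw [max_comm 0, max_comm 0]
  refine h1.trans ?_
  have h2 := abs_min_sub_min_le_max 1 (2 - s) 1 (2 - t)
  refine h2.trans ?_
  rw [sub_self, abs_zero, max_eq_right (abs_nonneg _), abs_sub_comm s t]
  apply le_of_eq; congr 1; ring

lemma cutoff_one {t : ℝ} (h : t ≤ 1) : cutoff t = 1 := by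
  unfold cutoff; rw [min_eq_left (by linarith)]; norm_num

lemma cutoff_zero {t : ℝ} (h : 2 ≤ t) : cutoff t = 0 := by
  unfold cutoff
  exact max_eq_left ((min_le_right _ _).trans (by linarith))

lemma cutoff_nonneg (t : ℝ) : 0 ≤ cutoff t := le_max_left _ _

lemma cutoff_le_one (t : ℝ) : cutoff t ≤ 1 := max_le zero_le_one (min_le_left _ _)

/-- Inner radii of the annular pieces. -/
def innerRad (κ ℓ : ℝ) : ℕ → ℝ
  | 0 => κ * ℓ
  | (k + 1) => 2 ^ k * ℓ

lemma pieces {n d : ℕ} {β A : ℝ} (hβ : 0 < β) (hA : 0 < A) {S : Euc d → Euc d → ℝ}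
    (hS : IsCZKernel n β A S) (x : Euc d) (ℓ κ : ℝ) (hℓ : 0 < ℓ) (hκ0 : 0 < κ) (hκ : κ ≤ 1 / 2) :
    ∃ g : ℕ → Euc d → ℝ,
      (∀ k y z, |g k y - g k z| ≤
        6 * A / κ ^ ((n : ℝ) + β + 1) / (2 ^ k * ℓ) ^ ((n : ℝ) + β + 1) * dist y z) ∧
      (∀ k y, 2 * (2 ^ k * ℓ) < dist y x → g k y = 0) ∧
      (∀ k y, |g k y| ≤
        6 * A / κ ^ ((n : ℝ) + β + 1) / (2 ^ k * ℓ) ^ ((n : ℝ) + β + 1) * (2 ^ k * ℓ)) ∧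
      (∀ y, 2 * κ * ℓ ≤ dist y x → ∑' k, g k y = S x y) := by
  set r := innerRad κ ℓ with hr
  have hr0 : r 0 = κ * ℓ := rfl
  have hrs : ∀ k, r (k + 1) = 2 ^ k * ℓ := fun k => rfl
  have hrlow : ∀ k, κ * (2 ^ k * ℓ) ≤ r k := by
    intro k
    cases k with
    | zero => rw [hr0]; simp
    | succ k =>
      rw [hrs, pow_succ]
      have : 0 < 2 ^ k * ℓ := by positivity
      nlinarith
  have hrup : ∀ k, r k ≤ 2 ^ k * ℓ := by
    intro k
    cases k with
    | zero => rw [hr0]; simp; nlinarith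
    | succ k =>
      rw [hrs, pow_succ]
      have : 0 < 2 ^ k * ℓ := by positivity
      nlinarith
  have hrpos : ∀ k, 0 < r k := fun k => lt_of_lt_of_le (by positivity) (hrlow k)
  let φ : ℕ → Euc d → ℝ := fun k y => cutoff (dist y x / (2 ^ k * ℓ)) - cutoff (dist y x / r k)
  have hφz : ∀ k y, dist y x ≤ r k → φ k y = 0 := by
    intro k y h
    have hD : 0 < 2 ^ k * ℓ := by positivity
    simp only [φ]
    rw [cutoff_one ((div_le_one hD).2 (h.trans (hrup k))), cutoff_one ((div_le_one (hrpos k)).2 h)]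
    ring
  have hφ0 : ∀ k y, dist y x ≤ κ * (2 ^ k * ℓ) → φ k y = 0 :=
    fun k y h => hφz k y (h.trans (hrlow k))
  have hφs : ∀ k y, 2 * (2 ^ k * ℓ) < dist y x → φ k y = 0 := by
    intro k y h
    have hD : 0 < 2 ^ k * ℓ := by positivity
    simp only [φ]
    rw [cutoff_zero ((le_div_iff₀ hD).2 h.le), cutoff_zero ((le_div_iff₀ (hrpos k)).2 ?_)]
    · ring
    · linarith [hrup k]
  have hφ1 : ∀ k y, |φ k y| ≤ 1 := by
    intro k y
    simp only [φ]
    rw [abs_le]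
    constructor <;> linarith [cutoff_nonneg (dist y x / (2 ^ k * ℓ)),
      cutoff_le_one (dist y x / (2 ^ k * ℓ)), cutoff_nonneg (dist y x / r k),
      cutoff_le_one (dist y x / r k)]
  have hφL : ∀ k y z, |φ k y - φ k z| ≤ 2 / (κ * (2 ^ k * ℓ)) * dist y z := by
    intro k y z
    have hD : 0 < κ * (2 ^ k * ℓ) := by positivity
    have hc : ∀ ρ, κ * (2 ^ k * ℓ) ≤ ρ → |cutoff (dist y x / ρ) - cutoff (dist z x / ρ)| ≤
        1 / (κ * (2 ^ k * ℓ)) * dist y z := by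
      intro ρ hρ
      have hρ0 : 0 < ρ := hD.trans_le hρ
      refine (cutoff_lip _ _).trans ?_
      rw [← sub_div, abs_div, abs_of_pos hρ0, div_eq_mul_one_div, mul_comm]
      gcongr
      exact abs_dist_sub_le y z x
    have h1 := hc _ (hrlow k)
    have h2 := hc (2 ^ k * ℓ) ((hrlow k).trans (hrup k))
    have e : φ k y - φ k z = (cutoff (dist y x / (2 ^ k * ℓ)) - cutoff (dist z x / (2 ^ k * ℓ)))
        - (cutoff (dist y x / r k) - cutoff (dist z x / r k)) := by simp only [φ]; ring
    rw [e]
    refine (abs_sub _ _).trans ?_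
    have e2 : 2 / (κ * (2 ^ k * ℓ)) * dist y z =
      1 / (κ * (2 ^ k * ℓ)) * dist y z + 1 / (κ * (2 ^ k * ℓ)) * dist y z := by ring
    rw [e2]
    exact add_le_add h2 h1
  have hker := fun k => kernel_lip hβ hA hS x (κ * (2 ^ k * ℓ)) (by positivity) (φ k)
    (hφ0 k) (hφ1 k) (hφL k)
  refine ⟨fun k y => S x y * φ k y, ?_, ?_, ?_, ?_⟩
  · intro k y z
    have h := (hker k).2 y z
    rw [Real.mul_rpow hκ0.le (by positivity), ← div_div] at h
    exact h
  · intro k y h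
    simp only []
    rw [hφs k y h, mul_zero]
  · intro k y
    have hD : (0 : ℝ) < 2 ^ k * ℓ := by positivity
    have h := (hker k).1 y
    refine h.trans ?_
    set D : ℝ := 2 ^ k * ℓ
    rw [Real.mul_rpow hκ0.le hD.le, Real.rpow_add hD _ 1, Real.rpow_one, Real.rpow_add hκ0 _ 1,
      Real.rpow_one]
    have h1 : 0 < κ ^ ((n : ℝ) + β) := Real.rpow_pos_of_pos hκ0 _
    have h2 : 0 < D ^ ((n : ℝ) + β) := Real.rpow_pos_of_pos hD _
    have e : 6 * A / (κ ^ ((n : ℝ) + β) * κ) / (D ^ ((n : ℝ) + β) * D) * D =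
        A / (κ ^ ((n : ℝ) + β) * D ^ ((n : ℝ) + β)) * (6 / κ) := by field_simp
    rw [e]
    apply le_mul_of_one_le_right (by positivity)
    rw [le_div_iff₀ hκ0]; linarith
  · intro y hy
    have hpart : ∀ N, ∑ k ∈ Finset.range (N + 1), φ k y =
        cutoff (dist y x / (2 ^ N * ℓ)) - cutoff (dist y x / (κ * ℓ)) := by
      intro N
      induction N with
      | zero => simp [φ, hr0]
      | succ N ih =>
        rw [Finset.sum_range_succ, ih]
        simp only [φ, hrs]
        ring
    obtain ⟨N, hN⟩ := pow_unbounded_of_one_lt (dist y x / ℓ) (one_lt_two (α := ℝ))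
    have hN' : dist y x ≤ 2 ^ N * ℓ := ((div_lt_iff₀ hℓ).1 hN).le
    rw [tsum_eq_sum (s := Finset.range (N + 1)), ← Finset.mul_sum, hpart N,
      cutoff_one ((div_le_one (by positivity)).2 hN'),
      cutoff_zero ((le_div_iff₀ (by positivity)).2 (by linarith))]
    · ring
    · intro k hk
      rw [Finset.mem_range, not_lt] at hk
      obtain ⟨m, rfl⟩ := Nat.exists_eq_add_of_le hk
      have e : N + 1 + m = (N + m) + 1 := by ring
      change S x y * φ (N + 1 + m) y = 0
      rw [hφz _ y, mul_zero]
      rw [e, hrs]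
      refine hN'.trans ?_
      gcongr
      · norm_num
      · omega

lemma scale_eq {n : ℕ} {β B D : ℝ} (hD : 0 < D) :
    B / D ^ ((n : ℝ) + β + 1) * D ^ (n + 1) = B * D ^ (-β) := by
  have h1 : D ^ (n + 1) = D ^ ((n : ℝ) + 1) := by
    rw [← Real.rpow_natCast]; push_cast; rfl
  rw [h1, div_mul_eq_mul_div, mul_div_assoc, ← Real.rpow_sub hD]
  congr 2; ring

lemma scale_pow {β ℓ : ℝ} (hℓ : 0 < ℓ) (k : ℕ) :
    (2 ^ k * ℓ) ^ (-β) = ℓ ^ (-β) * ((2 : ℝ) ^ (-β)) ^ k := by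
  rw [Real.mul_rpow (by positivity) hℓ.le, mul_comm, ← Real.rpow_natCast, ← Real.rpow_natCast,
    ← Real.rpow_mul (by norm_num), ← Real.rpow_mul (by norm_num), mul_comm (k : ℝ)]

lemma q_lt {β : ℝ} (hβ : 0 < β) : (2 : ℝ) ^ (-β) < 1 :=
  Real.rpow_lt_one_of_one_lt_of_neg (by norm_num) (by linarith)

lemma pieces_hasSum {n d : ℕ} {β B Q ℓ κ : ℝ} (hβ : 0 < β) (hB : 0 < B) (hQ : 0 ≤ Q) (hℓ : 0 < ℓ)
    {S : Euc d → Euc d → ℝ} (x : Euc d) (g : ℕ → Euc d → ℝ)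
    (hgL : ∀ k y z, |g k y - g k z| ≤ B / (2 ^ k * ℓ) ^ ((n : ℝ) + β + 1) * dist y z)
    (hgs : ∀ k y, 2 * (2 ^ k * ℓ) < dist y x → g k y = 0)
    (hgb : ∀ k y, |g k y| ≤ B / (2 ^ k * ℓ) ^ ((n : ℝ) + β + 1) * (2 ^ k * ℓ))
    (hgS : ∀ y, 2 * κ * ℓ ≤ dist y x → ∑' k, g k y = S x y)
    (σ : Measure (Euc d))
    (hσ : ∀ k : ℕ, σ (closedBall x (2 * (2 ^ k * ℓ))) ≤ ENNReal.ofReal (Q * (2 ^ k * ℓ) ^ n))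
    (hae : ∀ᵐ y ∂σ, 2 * κ * ℓ ≤ dist y x) :
    HasSum (fun k => ∫ y, g k y ∂σ) (∫ y, S x y ∂σ) := by
  have hb := fun k : ℕ => int_bound σ x (2 * (2 ^ k * ℓ)) _
    (B / (2 ^ k * ℓ) ^ ((n : ℝ) + β + 1) * (2 ^ k * ℓ)) (hσ k) (by positivity) (by positivity)
    (g k) (cont_of_lip (hgL k)) (hgs k) (hgb k)
  have hsum : Summable (fun k => ∫ y, ‖g k y‖ ∂σ) := by
    refine Summable.of_nonneg_of_le (fun k => integral_nonneg (fun y => norm_nonneg _))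
      (fun k => (hb k).2) ?_
    have e : ∀ k : ℕ, B / (2 ^ k * ℓ) ^ ((n : ℝ) + β + 1) * (2 ^ k * ℓ) * (Q * (2 ^ k * ℓ) ^ n) =
        (Q * B * ℓ ^ (-β)) * ((2 : ℝ) ^ (-β)) ^ k := by
      intro k
      have hD : 0 < 2 ^ k * ℓ := by positivity
      have h1 := scale_eq (n := n) (β := β) (B := B) hD
      rw [scale_pow hℓ] at h1
      calc _ = Q * (B / (2 ^ k * ℓ) ^ ((n : ℝ) + β + 1) * (2 ^ k * ℓ) ^ (n + 1)) := by ring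
        _ = _ := by rw [h1]; ring
    simp_rw [e]
    exact (summable_geometric_of_lt_one (by positivity) (q_lt hβ)).mul_left _
  have h := hasSum_integral_of_summable_integral_norm (fun k => (hb k).1) hsum
  have e : ∫ y, ∑' k, g k y ∂σ = ∫ y, S x y ∂σ :=
    integral_congr_ae (hae.mono (fun y hy => hgS y hy))
  rwa [e] at h

lemma msupport_pos {d : ℕ} (μ : Measure (Euc d)) (x : Euc d) (hx : x ∉ msupport μ)
    (hne : (msupport μ).Nonempty) : 0 < infDist x (msupport μ) := by
  have : ∃ r > 0, μ (ball x r) = 0 := by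
    simp only [msupport, mem_ofPred_eq, not_forall] at hx
    obtain ⟨r, hr, h⟩ := hx
    exact ⟨r, hr, by simpa using h⟩
  obtain ⟨r, hr, h0⟩ := this
  refine hr.trans_le ((le_infDist hne).2 ?_)
  intro y hy
  by_contra hlt
  rw [not_le] at hlt
  have h1 := hy (r - dist x y) (by linarith)
  have h2 : ball y (r - dist x y) ⊆ ball x r := by
    apply ball_subset_ball'
    rw [dist_comm y x]; linarith
  exact absurd (measure_mono_null h2 h0) h1.ne'

lemma msupport_ae {d : ℕ} (μ : Measure (Euc d)) (x : Euc d) :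
    ∀ᵐ y ∂μ, infDist x (msupport μ) ≤ dist y x := by
  have h : μ (msupport μ)ᶜ = 0 := by
    apply measure_null_of_locally_null
    intro y hy
    rw [mem_compl_iff] at hy
    simp only [msupport, mem_ofPred_eq, not_forall] at hy
    obtain ⟨r, hr, h⟩ := hy
    exact ⟨ball y r, mem_nhdsWithin_of_mem_nhds (ball_mem_nhds y hr), by simpa using h⟩
  have h2 : ∀ᵐ y ∂μ, y ∈ msupport μ := by
    rw [ae_iff]; exact h
  filter_upwards [h2] with y hy
  rw [dist_comm]
  exact infDist_le_dist_of_mem hy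

lemma cauchy_sum {q : ℝ} (hq0 : 0 ≤ q) (hq1 : q < 1) (α : ℕ → ℝ)
    (hα : ∀ k, 0 ≤ α k ∧ α k ≤ 1) :
    HasSum (fun k => q ^ k * ∑ i ∈ Finset.range (k + 1), α i)
      ((∑' k, q ^ k * α k) * (1 - q)⁻¹) := by
  have hg : Summable (fun k : ℕ => q ^ k) := summable_geometric_of_lt_one hq0 hq1
  have hs : Summable (fun k : ℕ => q ^ k * α k) :=
    Summable.of_nonneg_of_le (fun k => mul_nonneg (by positivity) (hα k).1)
      (fun k => mul_le_of_le_one_right (by positivity) (hα k).2) hg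
  have e : ∀ k, q ^ k * ∑ i ∈ Finset.range (k + 1), α i =
      ∑ ij ∈ Finset.HasAntidiagonal.antidiagonal k, (q ^ ij.1 * α ij.1) * q ^ ij.2 := by
    intro k
    rw [Finset.Nat.sum_antidiagonal_eq_sum_range_succ (fun i j => (q ^ i * α i) * q ^ j),
      Finset.mul_sum]
    apply Finset.sum_congr rfl
    intro i hi
    rw [Finset.mem_range] at hi
    have : q ^ k = q ^ i * q ^ (k - i) := by rw [← pow_add]; congr 1; omega
    rw [this]; ring
  simp_rw [e]
  rw [← tsum_geometric_of_lt_one hq0 hq1,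
    tsum_mul_tsum_eq_tsum_sum_antidiagonal_of_summable_norm hs.norm hg.norm]
  exact (summable_norm_sum_mul_antidiagonal_of_summable_norm hs.norm hg.norm).of_norm.hasSum

/-- multiscale approximation of `T_{S,μ}1(x)` by the flat integral over the
plane `L₀` at the scale of `ℓ = dist(x,E)`, with error controlled by `ℓ^{-β} Σ 2^{-kβ} α_k`.
The condition `d_B(σ,ν) ≤ t` is spelled out over `1`-Lipschitz functions supported in `B`. -/
theorem statement10 (n d : ℕ) (hn : 0 < n) (hnd : n < d) (β A C₀ c₁ Aadr : ℝ)
    (hβ : 0 < β) (hA : 0 < A) (hC₀ : 0 < C₀) (hc₁ : 0 < c₁) :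
    ∃ C : ℝ, 0 < C ∧
      ∀ μ : Measure (Euc d), IsADRWith n Aadr μ (msupport μ) →
      ∀ S : Euc d → Euc d → ℝ, IsCZKernel n β A S →
      ∀ x : Euc d, x ∉ msupport μ →
      ∀ ℓ : ℝ, ℓ = infDist x (msupport μ) →
      ∀ (L : ℕ → Set (Euc d)) (c α : ℕ → ℝ),
        (∀ k, IsNPlane n (L k)) →
        (∀ k, (L k ∩ closedBall x ((2 : ℝ) ^ k * ℓ)).Nonempty) →
        (∀ k, 0 ≤ c k ∧ c k ≤ C₀) →
        (∀ k, 0 ≤ α k ∧ α k ≤ 1) →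
        -- (i) d_{B(x, 2^{k+1}ℓ)}(μ, c_k ℋⁿ|_{L_k}) ≤ α_k (2^k ℓ)^{n+1}
        (∀ k, ∀ f : Euc d → ℝ, LipschitzWith 1 f →
          tsupport f ⊆ closedBall x ((2 : ℝ) ^ (k + 1) * ℓ) →
          |(∫ y, f y ∂μ) - c k * ∫ y in L k, f y ∂(μH[(n : ℝ)])|
            ≤ α k * ((2 : ℝ) ^ k * ℓ) ^ (n + 1)) →
        -- (ii) |c_{k+1} - c_k| ≤ α_{k+1}
        (∀ k, |c (k + 1) - c k| ≤ α (k + 1)) →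
        -- (iii) d_H(L_k ∩ B(x,2^{k+1}ℓ), L_{k+1} ∩ B(x,2^{k+1}ℓ)) ≤ α_{k+1} 2^{k+1} ℓ
        (∀ k, hausdorffDist (L k ∩ closedBall x ((2 : ℝ) ^ (k + 1) * ℓ))
            (L (k + 1) ∩ closedBall x ((2 : ℝ) ^ (k + 1) * ℓ))
            ≤ α (k + 1) * (2 : ℝ) ^ (k + 1) * ℓ) →
        -- (iv) dist(x, L₀) ≥ c₁ ℓ
        c₁ * ℓ ≤ infDist x (L 0) →
        |(∫ y, S x y ∂μ) - c 0 * ∫ y in L 0, S x y ∂(μH[(n : ℝ)])|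
          ≤ C * ℓ ^ (-β) * ∑' k : ℕ, (2 : ℝ) ^ (-(k : ℝ) * β) * α k := by
  obtain ⟨K, hK0, hK⟩ := plane_ball_measure n d
  set κ : ℝ := min c₁ 1 / 2 with hκdef
  have hκ0 : 0 < κ := by positivity
  have hκ : κ ≤ 1 / 2 := by rw [hκdef]; linarith [min_le_right c₁ 1]
  have hκ1 : 2 * κ ≤ 1 := by linarith
  have hκ2 : 2 * κ ≤ c₁ := by rw [hκdef]; linarith [min_le_left c₁ 1]
  clear_value κ
  set B : ℝ := 6 * A / κ ^ ((n : ℝ) + β + 1) with hBdef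
  have hB : 0 < B := by positivity
  set M : ℝ := 2 ^ n * K + C₀ * (100 * 6 ^ n * K) with hMdef
  have hM : 0 < M := by positivity
  set q : ℝ := (2 : ℝ) ^ (-β) with hq
  have hq0 : 0 < q := by positivity
  have hq1 : q < 1 := q_lt hβ
  have hq1' : 0 < 1 - q := by linarith
  refine ⟨(M + 1) * B * (1 - q)⁻¹, by positivity, ?_⟩
  intro μ hμ S hS x hx ℓ hℓ L c α hL hLne hc hα h1 h2 h3 h4
  obtain ⟨hA1, -, hEub, hADR⟩ := hμ
  have hEne : (msupport μ).Nonempty := by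
    rw [nonempty_iff_ne_empty]
    intro h
    rw [h] at hEub
    exact hEub Bornology.isBounded_empty
  have hℓ0 : 0 < ℓ := hℓ ▸ msupport_pos μ x hx hEne
  choose W hWL hWn using hL
  obtain rfl : (fun k => (W k : Set (Euc d))) = L := funext hWL
  simp only at h1 h3 h4 hLne ⊢
  obtain ⟨g, hgL, hgs, hgb, hgS⟩ := pieces hβ hA hS x ℓ κ hℓ0 hκ0 hκ
  rw [← hBdef] at hgL hgb
  have hsμ : HasSum (fun k => ∫ y, g k y ∂μ) (∫ y, S x y ∂μ) := by
    refine pieces_hasSum (Q := Aadr * 4 ^ n) hβ hB (by positivity) hℓ0 x g hgL hgs hgb hgS μ ?_ ?_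
    · intro k
      obtain ⟨z, hz, hxz⟩ := (infDist_lt_iff hEne).1
        (show infDist x (msupport μ) < 2 * ℓ by rw [← hℓ]; linarith)
      have hD : ℓ ≤ 2 ^ k * ℓ := le_mul_of_one_le_left hℓ0.le (one_le_pow₀ (by norm_num))
      have hsub : closedBall x (2 * (2 ^ k * ℓ)) ⊆ closedBall z (4 * (2 ^ k * ℓ)) := by
        apply closedBall_subset_closedBall'
        linarith
      refine (measure_mono hsub).trans ((hADR z hz _ (by positivity)).2.trans (le_of_eq ?_))
      rw [mul_pow]; congr 1; ring
    · filter_upwards [msupport_ae μ x] with y hy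
      rw [← hℓ] at hy
      nlinarith
  have hsL : HasSum (fun k => ∫ y in (W 0 : Set (Euc d)), g k y ∂(μH[(n : ℝ)]))
      (∫ y in (W 0 : Set (Euc d)), S x y ∂(μH[(n : ℝ)])) := by
    have hcl : IsClosed (W 0 : Set (Euc d)) := AffineSubspace.closed_of_finiteDimensional (W 0)
    refine pieces_hasSum (Q := K * 2 ^ n) hβ hB (by positivity) hℓ0 x g hgL hgs hgb hgS _ ?_ ?_
    · intro k
      rw [Measure.restrict_apply measurableSet_closedBall, inter_comm]
      refine (hK (W 0) (hWn 0) x _ (by positivity)).trans (le_of_eq ?_)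
      rw [mul_pow]; congr 1; ring
    · filter_upwards [ae_restrict_mem hcl.measurableSet] with y hy
      have := infDist_le_dist_of_mem (x := x) hy
      rw [dist_comm] at this
      nlinarith
  have hpiece : ∀ k, |(∫ y, g k y ∂μ) - c 0 * ∫ y in (W 0 : Set (Euc d)), g k y ∂(μH[(n : ℝ)])|
      ≤ ((M + 1) * B * ℓ ^ (-β)) * (q ^ k * ∑ i ∈ Finset.range (k + 1), α i) := by
    intro k
    set D : ℝ := 2 ^ k * ℓ with hD
    have hD0 : 0 < D := by positivity
    set Λ : ℝ := B / D ^ ((n : ℝ) + β + 1) with hΛ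
    have hΛ0 : 0 < Λ := by positivity
    set Z : ℝ := Λ * D ^ (n + 1) with hZ
    have hZ0 : 0 < Z := by positivity
    have hZe : Z = B * (ℓ ^ (-β) * q ^ k) := by
      rw [hZ, hΛ, scale_eq hD0, hD, scale_pow hℓ0]
    have hdir : |(∫ y, g k y ∂μ) - c k * ∫ y in (W k : Set (Euc d)), g k y ∂(μH[(n : ℝ)])|
        ≤ Z * α k := by
      have h := h1 k (fun y => g k y / Λ) ?_ ?_
      · rw [integral_div, integral_div, ← mul_div_assoc, ← sub_div, abs_div, abs_of_pos hΛ0,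
          div_le_iff₀ hΛ0] at h
        refine h.trans (le_of_eq ?_)
        rw [hZ]; ring
      · apply LipschitzWith.of_dist_le_mul
        intro y z
        rw [Real.dist_eq, ← sub_div, abs_div, abs_of_pos hΛ0, div_le_iff₀ hΛ0, NNReal.coe_one,
          one_mul, mul_comm]
        exact hgL k y z
      · apply closure_minimal _ isClosed_closedBall
        intro y hy
        by_contra hcon
        apply hy
        have : g k y = 0 := by
          apply hgs k y
          rw [mem_closedBall, not_le, pow_succ] at hcon
          rw [← hD]
          linarith
        simp [this]
    have htel : ∀ j, j ≤ k →
        |c j * (∫ y in (W j : Set (Euc d)), g k y ∂(μH[(n : ℝ)])) -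
          c 0 * ∫ y in (W 0 : Set (Euc d)), g k y ∂(μH[(n : ℝ)])| ≤
          M * Z * ∑ i ∈ Finset.range j, α (i + 1) := by
      intro j
      induction j with
      | zero => intro _; simp
      | succ j ih =>
        intro hj
        have ih' := ih (by omega)
        rw [Finset.sum_range_succ]
        set I' := ∫ y in (W (j + 1) : Set (Euc d)), g k y ∂(μH[(n : ℝ)]) with hI'
        set I := ∫ y in (W j : Set (Euc d)), g k y ∂(μH[(n : ℝ)]) with hI
        obtain ⟨p, hpW, hpx⟩ := hLne j
        rw [mem_closedBall] at hpx
        have hR0 : 0 < 2 ^ (j + 1) * ℓ := by positivity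
        have hcmp := plane_compare hK0 hK (W j) (W (j + 1)) (hWn j) (hWn (j + 1)) p x hpW
          (α (j + 1)) (2 ^ (j + 1) * ℓ) D Λ hR0
          (by rw [hD]; gcongr; norm_num) (hα (j + 1)).1 hΛ0.le
          (by rw [pow_succ]; linarith) (hLne (j + 1)) (by rw [← mul_assoc]; exact h3 j) (g k)
          (hgL k) (hgs k) (hgb k)
        have hbd := (norm_integral_le_integral_norm (g k)).trans
          (plane_int_bound hK0 hK (W (j + 1)) (hWn (j + 1)) x D Λ hD0 hΛ0.le (g k)
            (hgL k) (hgs k) (hgb k)).2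
        rw [Real.norm_eq_abs, ← hI'] at hbd
        have hbe : Λ * D * (K * (2 * D) ^ n) = 2 ^ n * K * Z := by rw [hZ, mul_pow]; ring
        rw [hbe] at hbd
        rw [← hI, ← hI', ← hZ, abs_sub_comm] at hcmp
        have hα0 := (hα (j + 1)).1
        have hstep : |c (j + 1) * I' - c j * I| ≤ M * Z * α (j + 1) := by
          have e : c (j + 1) * I' - c j * I = (c (j + 1) - c j) * I' + c j * (I' - I) := by ring
          rw [e]
          calc _ ≤ |c (j + 1) - c j| * |I'| + |c j| * |I' - I| := by
                rw [← abs_mul, ← abs_mul]; exact abs_add_le _ _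
            _ ≤ α (j + 1) * (2 ^ n * K * Z) + C₀ * (100 * 6 ^ n * K * Z * α (j + 1)) := by
                have hcj : |c j| ≤ C₀ := by rw [abs_of_nonneg (hc j).1]; exact (hc j).2
                gcongr
                exact h2 j
            _ = _ := by rw [hMdef]; ring
        have e : c (j + 1) * I' - c 0 * ∫ y in (W 0 : Set (Euc d)), g k y ∂(μH[(n : ℝ)]) =
          (c (j + 1) * I' - c j * I) +
          (c j * I - c 0 * ∫ y in (W 0 : Set (Euc d)), g k y ∂(μH[(n : ℝ)])) := by ring
        rw [e]
        refine (abs_add_le _ _).trans ?_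
        rw [mul_add]
        linarith
    have ht := htel k le_rfl
    have e : (∫ y, g k y ∂μ) - c 0 * ∫ y in (W 0 : Set (Euc d)), g k y ∂(μH[(n : ℝ)]) =
        ((∫ y, g k y ∂μ) - c k * ∫ y in (W k : Set (Euc d)), g k y ∂(μH[(n : ℝ)])) +
        (c k * (∫ y in (W k : Set (Euc d)), g k y ∂(μH[(n : ℝ)])) -
          c 0 * ∫ y in (W 0 : Set (Euc d)), g k y ∂(μH[(n : ℝ)])) := by ring
    rw [e]
    have hs1 : ∑ i ∈ Finset.range k, α (i + 1) ≤ ∑ i ∈ Finset.range (k + 1), α i := by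
      rw [Finset.sum_range_succ' α k]
      linarith [(hα 0).1]
    have hs2 : α k ≤ ∑ i ∈ Finset.range (k + 1), α i :=
      Finset.single_le_sum (f := α) (fun i _ => (hα i).1) (by simp)
    calc _ ≤ Z * α k + M * Z * ∑ i ∈ Finset.range k, α (i + 1) :=
          (abs_add_le _ _).trans (add_le_add hdir ht)
      _ ≤ Z * (∑ i ∈ Finset.range (k + 1), α i) + M * Z * ∑ i ∈ Finset.range (k + 1), α i := by
          gcongr
      _ = _ := by rw [hZe]; ring
  have hdiff := hsμ.sub (hsL.mul_left (c 0))
  have hbsum := (cauchy_sum hq0.le hq1 α hα).mul_left ((M + 1) * B * ℓ ^ (-β))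
  have hfin := tsum_of_norm_bounded (f := fun k => (∫ y, g k y ∂μ) -
    c 0 * ∫ y in (W 0 : Set (Euc d)), g k y ∂(μH[(n : ℝ)])) hbsum hpiece
  rw [hdiff.tsum_eq, Real.norm_eq_abs] at hfin
  have eq : ∀ k : ℕ, (2 : ℝ) ^ (-(k : ℝ) * β) = q ^ k := by
    intro k
    rw [hq, ← Real.rpow_natCast, ← Real.rpow_mul (by norm_num)]
    congr 1; ring
  simp_rw [eq]
  refine hfin.trans (le_of_eq ?_)
  ring
end
end
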